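/- Let L : ℕ → ℝ with L_n ≥ 1 for all n, Σ_{n=0}^∞ 1/L_n < ∞, B_N = Σ_{n=0}^N L_n and R_N = Σ_{n=N}^∞ 1/L_n. Assume: (i) B_{2N} ≤ c·B_N for all N > N₀ (some c > 1); (ii) B_N ∼ N^{d_H} with 2 ≤ d_H < 4; (iii) B_N^{(1)} ∼ N^{2+γ} and B̄_N^{(2)} ∼ N^{4−d_H+δ}; (iv) η is a sequence of functions on (0,1), each differentiable with η_n′(x) ≤ 0, satisfying the recursion η_n(x) = (η_{n+1}(x) + 1/L_n)/(1 + x·L_n·η_{n+1}(x)) and 1/L_n ≤ η_n(x) ≤ min(x^{−1/2}, R_n) for all n, x; (v) for every x in some interval (0,x₁) there exists N with x·F_N(x) > 1 ≥ x·F_{N−1}(x); (vi) |η_0′(x)| ∼ x^{−2+d_s/2} as x → 0 for some real d_s. Then d_s ≤ d_H − (2δ − (4−d_H)γ)/(2+γ). -/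

import Mathlib

/-- `X_N ∼ N^a`: there are constants `0 < c₁ ≤ c₂`, `c₁' ≤ c₂'` and `N₀` with
`c₁ N^a (log N)^{c₁'} ≤ X_N ≤ c₂ N^a (log N)^{c₂'}` for all `N > N₀`. -/
def NAsymp (X : ℕ → ℝ) (a : ℝ) : Prop :=
  ∃ c₁ c₂ c₁' c₂' : ℝ, ∃ N₀ : ℕ, 0 < c₁ ∧ c₁ ≤ c₂ ∧ c₁' ≤ c₂' ∧
    ∀ N : ℕ, N₀ < N →
      c₁ * (N:ℝ)^a * (Real.log N)^c₁' ≤ X N ∧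
      X N ≤ c₂ * (N:ℝ)^a * (Real.log N)^c₂'

/-- `f(x) ∼ x^a` as `x → 0`: there are constants `0 < c₁ ≤ c₂`, `c₁' ≤ c₂'` and
`x₀ ∈ (0,1)` with `c₁ x^a (log(1/x))^{c₁'} ≤ f(x) ≤ c₂ x^a (log(1/x))^{c₂'}`
for all `0 < x < x₀`. -/
def ZeroAsymp (f : ℝ → ℝ) (a : ℝ) : Prop :=
  ∃ c₁ c₂ c₁' c₂' x₀ : ℝ, 0 < c₁ ∧ c₁ ≤ c₂ ∧ c₁' ≤ c₂' ∧ 0 < x₀ ∧ x₀ < 1 ∧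
    ∀ x : ℝ, 0 < x → x < x₀ →
      c₁ * x^a * (Real.log (1/x))^c₁' ≤ f x ∧
      f x ≤ c₂ * x^a * (Real.log (1/x))^c₂'

/-!
Normalise `η` and its derivative by the attenuations `E n = ∏_{j < n} (1 + x L_j η_{j+1}(x))`. The
recursion and its derivative then telescope exactly:
`η_n / E_n = η_{n+1} / E_{n+1} + 1 / (L_n E_{n+1})`, and `-η_0'` is the sum over `k < n` of
`(1 - x)^k L_k (η_k / E_k) (η_{k+1} / E_{k+1})` plus a nonnegative remainder. Hence
`|η_0'(x)| ≥ (1 - x)^N E_{N+1}⁻² B̄_N^{(2)}`. At `x = 1 / B_N^{(1)}` the prefactor is bounded below: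
`η_n ≤ R_n` gives `E_{N+1} ≤ e`, and doubling with Cauchy–Schwarz gives `B_N^{(1)} ≥ N² / c`, so
`N x → 0`. Comparing exponents of `N` yields the bound on `d_s`.
-/

open Filter Finset Topology

/-- `HasGrowthExponent l X t a` says that `X = t ^ (a + o(1))` along `l`: eventually `X > 0`, and
`log X / log t` tends to `a`. It is the common weakening of `NAsymp` and `ZeroAsymp` in which
exponents can be compared and composed. -/
def HasGrowthExponent {ι : Type*} (l : Filter ι) (X t : ι → ℝ) (a : ℝ) : Prop :=
  (∀ᶠ i in l, 0 < X i) ∧ Tendsto (fun i => Real.log (X i) / Real.log (t i)) l (𝓝 a)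

namespace HasGrowthExponent

variable {ι κ : Type*} {l : Filter ι} {X Y t : ι → ℝ} {a b : ℝ}

lemma comp {m : Filter κ} {φ : κ → ι} (hX : HasGrowthExponent l X t a) (hφ : Tendsto φ m l) :
    HasGrowthExponent m (X ∘ φ) (t ∘ φ) a :=
  ⟨hφ.eventually hX.1, hX.2.comp hφ⟩

lemma trans (hX : HasGrowthExponent l X Y a) (hY : HasGrowthExponent l Y t b)
    (hYtop : Tendsto Y l atTop) : HasGrowthExponent l X t (a * b) := by
  refine ⟨hX.1, (hX.2.mul hY.2).congr' ?_⟩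
  filter_upwards [hYtop.eventually_gt_atTop 1] with i hi
  exact div_mul_div_cancel₀ (Real.log_pos hi).ne'

lemma le_of_const_mul_le [l.NeBot] {C : ℝ} (hX : HasGrowthExponent l X t a)
    (hY : HasGrowthExponent l Y t b) (ht : Tendsto t l atTop) (hC : 0 < C)
    (h : ∀ᶠ i in l, C * X i ≤ Y i) : a ≤ b := by
  have hlower : Tendsto (fun i => Real.log C / Real.log (t i) + Real.log (X i) / Real.log (t i))
      l (𝓝 (0 + a)) :=
    (tendsto_const_nhds.div_atTop (Real.tendsto_log_atTop.comp ht)).add hX.2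
  rw [← zero_add a]
  refine le_of_tendsto_of_tendsto hlower hY.2 ?_
  filter_upwards [h, hX.1, ht.eventually_gt_atTop 1] with i hi hXi hti
  rw [← add_div, ← Real.log_mul hC.ne' hXi.ne']
  exact div_le_div_of_nonneg_right (Real.log_le_log (by positivity) hi) (Real.log_pos hti).le

lemma const_mul_rpow_mul_log_rpow {c : ℝ} (hc : 0 < c) (a b : ℝ) (ht : Tendsto t l atTop) :
    HasGrowthExponent l (fun i => c * t i ^ a * Real.log (t i) ^ b) t a := by
  have hlog : Tendsto (fun i => Real.log (t i)) l atTop := Real.tendsto_log_atTop.comp ht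
  constructor
  · filter_upwards [ht.eventually_gt_atTop 1] with i hi
    have hlog_pos := Real.log_pos hi
    positivity
  · have hlim : Tendsto (fun y : ℝ => Real.log c / y + a + b * (Real.log y / y)) atTop
        (𝓝 (0 + a + b * 0)) :=
      ((tendsto_const_nhds.div_atTop tendsto_id).add_const a).add
        (Real.isLittleO_log_id_atTop.tendsto_div_nhds_zero.const_mul b)
    rw [zero_add, mul_zero, add_zero] at hlim
    refine (hlim.comp hlog).congr' ?_
    filter_upwards [ht.eventually_gt_atTop 1] with i hi
    have hlog_pos : 0 < Real.log (t i) := Real.log_pos hi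
    have ht_pos : 0 < t i := one_pos.trans hi
    rw [Real.log_mul (by positivity) (by positivity), Real.log_mul (by positivity) (by positivity),
      Real.log_rpow ht_pos, Real.log_rpow hlog_pos, Function.comp_apply]
    field_simp

lemma of_le_of_le {X₁ X₂ : ι → ℝ} (h₁ : HasGrowthExponent l X₁ t a)
    (h₂ : HasGrowthExponent l X₂ t a) (ht : Tendsto t l atTop)
    (h : ∀ᶠ i in l, X₁ i ≤ X i ∧ X i ≤ X₂ i) : HasGrowthExponent l X t a := by
  have hpos : ∀ᶠ i in l, 0 < X i := by
    filter_upwards [h, h₁.1] with i hi hi₁ using hi₁.trans_le hi.1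
  refine ⟨hpos, tendsto_of_tendsto_of_tendsto_of_le_of_le' h₁.2 h₂.2 ?_ ?_⟩
  · filter_upwards [h, h₁.1, ht.eventually_gt_atTop 1] with i hi hi₁ hti
    exact div_le_div_of_nonneg_right (Real.log_le_log hi₁ hi.1) (Real.log_pos hti).le
  · filter_upwards [h, hpos, ht.eventually_gt_atTop 1] with i hi hXi hti
    exact div_le_div_of_nonneg_right (Real.log_le_log hXi hi.2) (Real.log_pos hti).le

end HasGrowthExponent

lemma NAsymp.hasGrowthExponent {X : ℕ → ℝ} {a : ℝ} (h : NAsymp X a) :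
    HasGrowthExponent atTop X (fun N => (N : ℝ)) a := by
  obtain ⟨c₁, c₂, b₁, b₂, N₀, hc₁, hc, -, hX⟩ := h
  have ht := tendsto_natCast_atTop_atTop (R := ℝ)
  exact .of_le_of_le (.const_mul_rpow_mul_log_rpow hc₁ a b₁ ht)
    (.const_mul_rpow_mul_log_rpow (hc₁.trans_le hc) a b₂ ht) ht
    ((eventually_gt_atTop N₀).mono hX)

lemma ZeroAsymp.hasGrowthExponent {f : ℝ → ℝ} {a : ℝ} (h : ZeroAsymp f a) :
    HasGrowthExponent (𝓝[>] 0) f (fun x => x⁻¹) (-a) := by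
  obtain ⟨c₁, c₂, b₁, b₂, x₀, hc₁, hc, -, hx₀, -, hf⟩ := h
  have ht := tendsto_inv_nhdsGT_zero (𝕜 := ℝ)
  refine .of_le_of_le (.const_mul_rpow_mul_log_rpow hc₁ (-a) b₁ ht)
    (.const_mul_rpow_mul_log_rpow (hc₁.trans_le hc) (-a) b₂ ht) ht ?_
  filter_upwards [Ioo_mem_nhdsGT hx₀] with x hx
  simpa only [one_div, Real.inv_rpow hx.1.le, Real.rpow_neg hx.1.le, inv_inv] using hf x hx.1 hx.2

namespace HalfLineMultigraph

variable {L : ℕ → ℝ}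

/-- The resistance of the segment formed by the edges `m, …, n`, that is, between the vertices `m`
and `n + 1`. -/
noncomputable def resistance (L : ℕ → ℝ) (m n : ℕ) : ℝ := ∑ k ∈ Icc m n, 1 / L k

/-- The resistance `R_N` from the vertex `N` to infinity (`0` if the series diverges). -/
noncomputable def resistanceToInfty (L : ℕ → ℝ) (N : ℕ) : ℝ := ∑' n, 1 / L (N + n)

/-- The resistance-weighted volume `B_N^{(1)}`, which sets the scale `x = 1 / B_N^{(1)}` at which
the generating functions are evaluated. -/
noncomputable def weightedVolume (L : ℕ → ℝ) (N : ℕ) : ℝ :=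
  ∑ k ∈ range (N + 1), L k * resistanceToInfty L (k + 1)

/-- The volume `B̄_N^{(2)}` weighted by two resistances cut off at the edge `N`. -/
noncomputable def truncatedWeightedVolume (L : ℕ → ℝ) (N : ℕ) : ℝ :=
  ∑ k ∈ range (N + 1), L k * resistance L k N * resistance L (k + 1) N

lemma resistance_nonneg (hL : ∀ n, 0 < L n) (m n : ℕ) : 0 ≤ resistance L m n :=
  sum_nonneg fun k _ => (one_div_pos.2 (hL k)).le

lemma truncatedWeightedVolume_nonneg (hL : ∀ n, 0 < L n) (N : ℕ) :
    0 ≤ truncatedWeightedVolume L N :=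
  sum_nonneg fun k _ =>
    mul_nonneg (mul_nonneg (hL k).le (resistance_nonneg hL _ _)) (resistance_nonneg hL _ _)

lemma resistance_le_resistanceToInfty (hL : ∀ n, 0 < L n) (hsum : Summable fun n => 1 / L n)
    {k m : ℕ} (hkm : k ≤ m) (n : ℕ) : resistance L m n ≤ resistanceToInfty L k := by
  have hinv : ∀ i, 0 ≤ 1 / L i := fun i => (one_div_pos.2 (hL i)).le
  have hshift : Summable fun i => 1 / L (k + i) := by
    simpa only [add_comm k] using (summable_nat_add_iff k).2 hsum
  calc resistance L m n ≤ ∑ i ∈ Ico k (n + 1), 1 / L i := by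
        rw [Ico_add_one_right_eq_Icc]
        exact sum_le_sum_of_subset_of_nonneg (Icc_subset_Icc_left hkm) fun i _ _ => hinv i
    _ = ∑ i ∈ range (n + 1 - k), 1 / L (k + i) := sum_Ico_eq_sum_range _ _ _
    _ ≤ resistanceToInfty L k := hshift.sum_le_tsum _ fun i _ => hinv (k + i)

lemma sq_le_resistance_mul_volume (hL : ∀ n, 0 < L n) (N : ℕ) :
    (N : ℝ) ^ 2 ≤ resistance L (N + 1) (2 * N) * ∑ n ∈ range (2 * N + 1), L n := by
  have hcauchy : (∑ _n ∈ Icc (N + 1) (2 * N), (1 : ℝ)) ^ 2 ≤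
      resistance L (N + 1) (2 * N) * ∑ n ∈ Icc (N + 1) (2 * N), L n :=
    sum_sq_le_sum_mul_sum_of_sq_le_mul _ (fun n _ => (one_div_pos.2 (hL n)).le)
      (fun n _ => (hL n).le) fun n _ => by rw [one_div_mul_cancel (hL n).ne', one_pow]
  have hcard : #(Icc (N + 1) (2 * N)) = N := by rw [Nat.card_Icc]; omega
  rw [sum_const, hcard, nsmul_one] at hcauchy
  refine hcauchy.trans (mul_le_mul_of_nonneg_left ?_ (resistance_nonneg hL _ _))
  refine sum_le_sum_of_subset_of_nonneg (fun n hn => ?_) fun n _ _ => (hL n).le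
  rw [mem_Icc] at hn
  rw [mem_range]
  omega

lemma sq_div_le_weightedVolume (hL : ∀ n, 0 < L n) (hsum : Summable fun n => 1 / L n) {c : ℝ}
    (hc : 0 < c) {N : ℕ}
    (hdbl : ∑ n ∈ range (2 * N + 1), L n ≤ c * ∑ n ∈ range (N + 1), L n) :
    (N : ℝ) ^ 2 / c ≤ weightedVolume L N := by
  have hweight : (∑ k ∈ range (N + 1), L k) * resistance L (N + 1) (2 * N) ≤
      weightedVolume L N := by
    rw [sum_mul]
    refine sum_le_sum fun k hk => mul_le_mul_of_nonneg_left ?_ (hL k).le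
    exact resistance_le_resistanceToInfty hL hsum (Nat.succ_le_of_lt (mem_range.1 hk)) _
  rw [div_le_iff₀ hc]
  calc (N : ℝ) ^ 2 ≤ resistance L (N + 1) (2 * N) * ∑ n ∈ range (2 * N + 1), L n :=
        sq_le_resistance_mul_volume hL N
    _ ≤ resistance L (N + 1) (2 * N) * (c * ∑ n ∈ range (N + 1), L n) :=
        mul_le_mul_of_nonneg_left hdbl (resistance_nonneg hL _ _)
    _ = (∑ k ∈ range (N + 1), L k) * resistance L (N + 1) (2 * N) * c := by ring
    _ ≤ weightedVolume L N * c := mul_le_mul_of_nonneg_right hweight hc.le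

section Doubling

variable {c : ℝ} (hL : ∀ n, 0 < L n) (hsum : Summable fun n => 1 / L n) (hc : 0 < c)
  (hdbl : ∀ᶠ N in atTop, ∑ n ∈ range (2 * N + 1), L n ≤ c * ∑ n ∈ range (N + 1), L n)
include hL hsum hc hdbl

lemma eventually_mul_le_weightedVolume (C : ℝ) : ∀ᶠ N : ℕ in atTop, C * N ≤ weightedVolume L N := by
  filter_upwards [hdbl, tendsto_natCast_atTop_atTop.eventually_ge_atTop (C * c)] with N hN hCN
  refine le_trans ?_ (sq_div_le_weightedVolume hL hsum hc hN)
  rw [le_div_iff₀ hc, mul_right_comm, sq]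
  exact mul_le_mul_of_nonneg_right hCN N.cast_nonneg

lemma tendsto_weightedVolume_atTop : Tendsto (weightedVolume L) atTop atTop :=
  tendsto_atTop_mono' _ (eventually_mul_le_weightedVolume hL hsum hc hdbl 1)
    (by simpa only [one_mul] using tendsto_natCast_atTop_atTop)

lemma two_le_growthExponent_weightedVolume {α : ℝ}
    (hα : HasGrowthExponent atTop (weightedVolume L) (fun N => (N : ℝ)) α) : 2 ≤ α := by
  have ht := tendsto_natCast_atTop_atTop (R := ℝ)
  have hsq := HasGrowthExponent.const_mul_rpow_mul_log_rpow one_pos 2 0 ht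
  refine hsq.le_of_const_mul_le hα ht (inv_pos.2 hc) ?_
  filter_upwards [hdbl] with N hN
  simpa [div_eq_inv_mul] using sq_div_le_weightedVolume hL hsum hc hN

end Doubling

/-- The product `E_n = ∏_{j < n} (1 + x L_j u_{j+1})` of the denominators of the recursion
`u_n = (u_{n+1} + 1 / L_n) / (1 + x L_n u_{n+1})`; dividing `u_n` by `E_n` makes it telescope. -/
def attenuation (L u : ℕ → ℝ) (x : ℝ) (n : ℕ) : ℝ := ∏ j ∈ range n, (1 + x * L j * u (j + 1))

section Attenuation

variable {u u' : ℕ → ℝ} {x : ℝ}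

lemma attenuation_succ (L u : ℕ → ℝ) (x : ℝ) (n : ℕ) :
    attenuation L u x (n + 1) = attenuation L u x n * (1 + x * L n * u (n + 1)) :=
  prod_range_succ _ _

section Positivity

variable (hL : ∀ n, 0 < L n) (hu : ∀ n, 0 ≤ u n) (hx : 0 ≤ x)
include hL hu hx

lemma mul_mul_succ_nonneg (n : ℕ) : 0 ≤ x * L n * u (n + 1) :=
  mul_nonneg (mul_nonneg hx (hL n).le) (hu (n + 1))

lemma attenuation_pos (n : ℕ) : 0 < attenuation L u x n :=
  prod_pos fun j _ => add_pos_of_pos_of_nonneg one_pos (mul_mul_succ_nonneg hL hu hx j)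

lemma attenuation_mono : Monotone (attenuation L u x) := by
  refine monotone_nat_of_le_succ fun n => ?_
  rw [attenuation_succ]
  exact le_mul_of_one_le_right (attenuation_pos hL hu hx n).le
    (le_add_of_nonneg_right (mul_mul_succ_nonneg hL hu hx n))

lemma attenuation_le_exp (n : ℕ) :
    attenuation L u x n ≤ Real.exp (x * ∑ k ∈ range n, L k * u (k + 1)) := by
  simpa only [attenuation, mul_sum, mul_assoc] using
    Real.prod_one_add_le_exp_sum (range n) (mul_mul_succ_nonneg hL hu hx)

lemma neg_deriv_eq_sum_add
    (hrec' : ∀ n, u' n = (1 - x) * u' (n + 1) / (1 + x * L n * u (n + 1)) ^ 2 -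
      L n * u n * u (n + 1) / (1 + x * L n * u (n + 1)))
    (n : ℕ) :
    -u' 0 = ∑ k ∈ range n, (1 - x) ^ k *
        (L k * (u k / attenuation L u x k) * (u (k + 1) / attenuation L u x (k + 1))) +
      (1 - x) ^ n * (-u' n / attenuation L u x n ^ 2) := by
  induction n with
  | zero => simp [attenuation]
  | succ n ih =>
    have hE := (attenuation_pos hL hu hx n).ne'
    have hP : 1 + x * L n * u (n + 1) ≠ 0 :=
      (add_pos_of_pos_of_nonneg one_pos (mul_mul_succ_nonneg hL hu hx n)).ne'
    rw [ih, sum_range_succ, add_assoc, attenuation_succ, hrec' n]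
    congr 1
    field_simp
    ring

end Positivity

section Recursion

variable (hrec : ∀ n, u n = (u (n + 1) + 1 / L n) / (1 + x * L n * u (n + 1)))
include hrec

lemma div_attenuation_eq_add (n : ℕ) :
    u n / attenuation L u x n =
      u (n + 1) / attenuation L u x (n + 1) + 1 / L n / attenuation L u x (n + 1) := by
  rw [hrec n, div_div, mul_comm, ← attenuation_succ, add_div]

variable (hL : ∀ n, 0 < L n) (hu : ∀ n, 0 ≤ u n) (hx : 0 ≤ x)
include hL hu hx

lemma resistance_div_attenuation_le {k N : ℕ} (hk : k ≤ N + 1) :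
    resistance L k N / attenuation L u x (N + 1) ≤ u k / attenuation L u x k := by
  have hpos := attenuation_pos hL hu hx
  induction hk using Nat.decreasingInduction with
  | self =>
    rw [resistance, Icc_eq_empty (by omega), sum_empty, zero_div]
    exact div_nonneg (hu _) (hpos _).le
  | of_succ k hk ih =>
    have hsplit : resistance L k N = resistance L (k + 1) N + 1 / L k := by
      rw [resistance, ← add_sum_Ioc_eq_sum_Icc (by omega), add_comm, ← Icc_add_one_left_eq_Ioc]
      rfl
    rw [hsplit, add_div, div_attenuation_eq_add hrec]
    exact add_le_add ih (div_le_div_of_nonneg_left (one_div_pos.2 (hL k)).le (hpos _)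
      (attenuation_mono hL hu hx hk))

lemma truncatedWeightedVolume_le_neg_deriv
    (hrec' : ∀ n, u' n = (1 - x) * u' (n + 1) / (1 + x * L n * u (n + 1)) ^ 2 -
      L n * u n * u (n + 1) / (1 + x * L n * u (n + 1)))
    (hx1 : x ≤ 1) (hu' : ∀ n, u' n ≤ 0) (N : ℕ) :
    (1 - x) ^ N / attenuation L u x (N + 1) ^ 2 * truncatedWeightedVolume L N ≤ -u' 0 := by
  have hx1' : 0 ≤ 1 - x := sub_nonneg.2 hx1
  have hremainder : 0 ≤ (1 - x) ^ (N + 1) * (-u' (N + 1) / attenuation L u x (N + 1) ^ 2) :=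
    mul_nonneg (pow_nonneg hx1' _) (div_nonneg (neg_nonneg.2 (hu' _)) (sq_nonneg _))
  rw [neg_deriv_eq_sum_add hL hu hx hrec' (N + 1), truncatedWeightedVolume, mul_sum]
  refine le_add_of_le_of_nonneg (sum_le_sum fun k hk => ?_) hremainder
  have hkN : k ≤ N := Nat.lt_succ_iff.1 (mem_range.1 hk)
  set E := attenuation L u x (N + 1)
  have hE : 0 < E := attenuation_pos hL hu hx (N + 1)
  calc (1 - x) ^ N / E ^ 2 * (L k * resistance L k N * resistance L (k + 1) N)
      = (1 - x) ^ N * (L k * (resistance L k N / E) * (resistance L (k + 1) N / E)) := by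
        field_simp
    _ ≤ _ := by
        have hLk := (hL k).le
        have hres := resistance_nonneg hL
        have hk_le := resistance_div_attenuation_le hrec hL hu hx (by omega : k ≤ N + 1)
        have hk_succ_le := resistance_div_attenuation_le hrec hL hu hx (by omega : k + 1 ≤ N + 1)
        have hpow := pow_le_pow_of_le_one hx1' (sub_le_self 1 hx) hkN
        have hres_k := hres k N
        have hres_succ := hres (k + 1) N
        have hu_k := (div_nonneg hres_k hE.le).trans hk_le
        gcongr

end Recursion

end Attenuation

lemma hasDerivAt_recursion {f : ℝ → ℝ} {f' x ℓ : ℝ} (hf : HasDerivAt f f' x) (hℓ : ℓ ≠ 0)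
    (hden : 1 + x * ℓ * f x ≠ 0) :
    HasDerivAt (fun y => (f y + 1 / ℓ) / (1 + y * ℓ * f y))
      ((1 - x) * f' / (1 + x * ℓ * f x) ^ 2 -
        ℓ * ((f x + 1 / ℓ) / (1 + x * ℓ * f x)) * f x / (1 + x * ℓ * f x)) x := by
  have hden' : HasDerivAt (fun y => 1 + y * ℓ * f y) (1 * ℓ * f x + x * ℓ * f') x :=
    (((hasDerivAt_id x).mul_const ℓ).mul hf).const_add 1
  refine ((hf.add_const (1 / ℓ)).div hden' hden).congr_deriv ?_
  field_simp
  ring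

/-- `η n` stands for the generating function, divided by `L n`, of returns to the vertex `n` in the
multigraph with the vertices below `n` deleted, and `η' n` for its derivative. Only the properties
of these functions on `(0, 1)` that bound `η' 0` from below are recorded. -/
structure IsReturnFamily (L : ℕ → ℝ) (η η' : ℕ → ℝ → ℝ) : Prop where
  hasDerivAt : ∀ n, ∀ x ∈ Set.Ioo (0 : ℝ) 1, HasDerivAt (η n) (η' n x) x
  deriv_nonpos : ∀ n, ∀ x ∈ Set.Ioo (0 : ℝ) 1, η' n x ≤ 0
  recursion : ∀ n, ∀ x ∈ Set.Ioo (0 : ℝ) 1,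
    η n x = (η (n + 1) x + 1 / L n) / (1 + x * L n * η (n + 1) x)
  nonneg : ∀ n, ∀ x ∈ Set.Ioo (0 : ℝ) 1, 0 ≤ η n x
  le_resistanceToInfty : ∀ n, ∀ x ∈ Set.Ioo (0 : ℝ) 1, η n x ≤ resistanceToInfty L n

namespace IsReturnFamily

variable {η η' : ℕ → ℝ → ℝ} {x : ℝ} (hη : IsReturnFamily L η η') (hL : ∀ n, 0 < L n)
include hη hL

lemma deriv_recursion (hx : x ∈ Set.Ioo (0 : ℝ) 1) (n : ℕ) :
    η' n x = (1 - x) * η' (n + 1) x / (1 + x * L n * η (n + 1) x) ^ 2 -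
      L n * η n x * η (n + 1) x / (1 + x * L n * η (n + 1) x) := by
  have hden : 1 + x * L n * η (n + 1) x ≠ 0 := (add_pos_of_pos_of_nonneg one_pos
    (mul_mul_succ_nonneg (u := fun n => η n x) hL (fun n => hη.nonneg n x hx) hx.1.le n)).ne'
  have heq : η n =ᶠ[𝓝 x] fun y => (η (n + 1) y + 1 / L n) / (1 + y * L n * η (n + 1) y) :=
    mem_of_superset (isOpen_Ioo.mem_nhds hx) (hη.recursion n)
  rw [hη.recursion n x hx]
  exact (hη.hasDerivAt n x hx).unique
    ((hasDerivAt_recursion (hη.hasDerivAt (n + 1) x hx) (hL n).ne' hden).congr_of_eventuallyEq heq)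

lemma attenuation_le_exp_weightedVolume (hx : x ∈ Set.Ioo (0 : ℝ) 1) (N : ℕ) :
    attenuation L (fun n => η n x) x (N + 1) ≤ Real.exp (x * weightedVolume L N) := by
  refine (attenuation_le_exp hL (fun n => hη.nonneg n x hx) hx.1.le (N + 1)).trans
    (Real.exp_le_exp.2 (mul_le_mul_of_nonneg_left ?_ hx.1.le))
  exact sum_le_sum fun k _ =>
    mul_le_mul_of_nonneg_left (hη.le_resistanceToInfty (k + 1) x hx) (hL k).le

lemma truncatedWeightedVolume_le_abs_deriv (hx : x ∈ Set.Ioo (0 : ℝ) 1) (N : ℕ) :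
    (1 - x) ^ N / Real.exp (x * weightedVolume L N) ^ 2 * truncatedWeightedVolume L N ≤
      |η' 0 x| := by
  have hnonneg := fun n => hη.nonneg n x hx
  have hE := attenuation_pos hL hnonneg hx.1.le (N + 1)
  have hvol := truncatedWeightedVolume_nonneg hL N
  have hpow : 0 ≤ (1 - x) ^ N := pow_nonneg (sub_nonneg.2 hx.2.le) N
  have hEle := hη.attenuation_le_exp_weightedVolume hL hx N
  calc (1 - x) ^ N / Real.exp (x * weightedVolume L N) ^ 2 * truncatedWeightedVolume L N
      ≤ (1 - x) ^ N / attenuation L (fun n => η n x) x (N + 1) ^ 2 *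
          truncatedWeightedVolume L N := by gcongr
    _ ≤ -η' 0 x := truncatedWeightedVolume_le_neg_deriv (u' := fun n => η' n x)
        (fun n => hη.recursion n x hx) hL hnonneg hx.1.le (hη.deriv_recursion hL hx) hx.2.le
        (fun n => hη.deriv_nonpos n x hx) N
    _ ≤ |η' 0 x| := neg_le_abs _

lemma truncatedWeightedVolume_le_abs_deriv_inv_weightedVolume {N : ℕ}
    (hone : 1 < weightedVolume L N) (hN : 2 * N ≤ weightedVolume L N) :
    1 / 2 / Real.exp 1 ^ 2 * truncatedWeightedVolume L N ≤ |η' 0 (weightedVolume L N)⁻¹| := by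
  have hpos : 0 < weightedVolume L N := one_pos.trans hone
  have hx : (weightedVolume L N)⁻¹ ∈ Set.Ioo (0 : ℝ) 1 :=
    ⟨inv_pos.2 hpos, inv_lt_one_of_one_lt₀ hone⟩
  have hmain := hη.truncatedWeightedVolume_le_abs_deriv hL hx N
  have hvol := truncatedWeightedVolume_nonneg hL N
  have hhalf : N * (weightedVolume L N)⁻¹ ≤ 1 / 2 := by
    rw [← div_eq_mul_inv, div_le_iff₀ hpos]
    linarith
  have hpow : 1 / 2 ≤ (1 - (weightedVolume L N)⁻¹) ^ N := by
    have hbernoulli :=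
      one_add_mul_sub_le_pow (a := 1 - (weightedVolume L N)⁻¹) (by linarith [hx.2]) N
    linarith
  rw [inv_mul_cancel₀ hpos.ne'] at hmain
  refine le_trans ?_ hmain
  gcongr

end IsReturnFamily

end HalfLineMultigraph

open HalfLineMultigraph

/-- In the notation of `stmt_12`: `α = 2 + γ`, `β = 4 - d_H + δ` and `θ = 2 - d_s / 2`. -/
theorem stmt_12_general {L : ℕ → ℝ} (hL : ∀ n, 0 < L n) (hsum : Summable fun n => 1 / L n)
    {c : ℝ} (hc : 0 < c)
    (hdbl : ∀ᶠ N in atTop, ∑ n ∈ range (2 * N + 1), L n ≤ c * ∑ n ∈ range (N + 1), L n)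
    {α β : ℝ} (hα : HasGrowthExponent atTop (weightedVolume L) (fun N => (N : ℝ)) α)
    (hβ : HasGrowthExponent atTop (truncatedWeightedVolume L) (fun N => (N : ℝ)) β)
    {η η' : ℕ → ℝ → ℝ} (hη : IsReturnFamily L η η') {θ : ℝ}
    (hθ : HasGrowthExponent (𝓝[>] 0) (fun x => |η' 0 x|) (fun x => x⁻¹) θ) :
    β / α ≤ θ := by
  have htop := tendsto_weightedVolume_atTop hL hsum hc hdbl
  have hderiv : HasGrowthExponent atTop (fun N => |η' 0 (weightedVolume L N)⁻¹|)
      (fun N => (N : ℝ)) (θ * α) := by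
    have hcomp := hθ.comp (tendsto_inv_atTop_nhdsGT_zero.comp htop)
    simp only [Function.comp_def, inv_inv] at hcomp
    exact hcomp.trans hα htop
  rw [div_le_iff₀ (two_pos.trans_le (two_le_growthExponent_weightedVolume hL hsum hc hdbl hα))]
  refine hβ.le_of_const_mul_le hderiv tendsto_natCast_atTop_atTop
    (by positivity : 0 < 1 / 2 / Real.exp 1 ^ 2) ?_
  filter_upwards [htop.eventually_gt_atTop 1,
    eventually_mul_le_weightedVolume hL hsum hc hdbl 2] with N hone hN
  exact hη.truncatedWeightedVolume_le_abs_deriv_inv_weightedVolume hL hone hN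

/-- Lemma 7 of the paper: under volume doubling, `B_N ∼ N^{d_H}` with `2 ≤ d_H < 4`,
`B_N^{(1)} ∼ N^{2+γ}`, `B̄_N^{(2)} ∼ N^{4-d_H+δ}`, the universal bounds
`1/L_n ≤ η_n(x) ≤ min(x^{-1/2}, R_n)`, and existence of the crossover scale `N⁻(x)`,
the spectral dimension satisfies `d_s ≤ d_H - (2δ - (4-d_H)γ)/(2+γ)`. -/
theorem stmt_12 (L : ℕ → ℝ) (hL : ∀ n : ℕ, 1 ≤ L n)
    (hsum : Summable (fun n : ℕ => 1 / L n))
    (R : ℕ → ℝ) (hR : ∀ N : ℕ, R N = ∑' n : ℕ, 1 / L (N + n))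
    (c : ℝ) (hc : 1 < c) (N₀ : ℕ)
    (hdbl : ∀ N : ℕ, N₀ < N →
      (∑ n ∈ Finset.range (2*N+1), L n) ≤ c * ∑ n ∈ Finset.range (N+1), L n)
    (dH γ δ : ℝ) (hdH2 : 2 ≤ dH) (hdH4 : dH < 4)
    (hB : NAsymp (fun N => ∑ n ∈ Finset.range (N+1), L n) dH)
    (hB1 : NAsymp (fun N => ∑ k ∈ Finset.range (N+1), L k * R (k+1)) (2 + γ))
    (hB2bar : NAsymp (fun N => ∑ k ∈ Finset.range (N+1),
      L k * (∑ m ∈ Finset.Icc k N, 1 / L m) * (∑ n ∈ Finset.Icc (k+1) N, 1 / L n))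
      (4 - dH + δ))
    (η η' : ℕ → ℝ → ℝ)
    (hderiv : ∀ (n : ℕ), ∀ x ∈ Set.Ioo (0:ℝ) 1, HasDerivAt (η n) (η' n x) x)
    (hmono : ∀ (n : ℕ), ∀ x ∈ Set.Ioo (0:ℝ) 1, η' n x ≤ 0)
    (hrec : ∀ (n : ℕ), ∀ x ∈ Set.Ioo (0:ℝ) 1,
      η n x = (η (n+1) x + 1 / L n) / (1 + x * L n * η (n+1) x))
    (hbnd : ∀ (n : ℕ), ∀ x ∈ Set.Ioo (0:ℝ) 1,
      1 / L n ≤ η n x ∧ η n x ≤ min (x ^ (-(1:ℝ)/2)) (R n))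
    (x₁ : ℝ) (hx₁ : 0 < x₁)
    (hcross : ∀ x : ℝ, 0 < x → x < x₁ → ∃ N : ℕ, 1 ≤ N ∧
      1 < x * ∑ k ∈ Finset.range (N+1), L k * η (k+1) x ∧
      x * ∑ k ∈ Finset.range N, L k * η (k+1) x ≤ 1)
    (ds : ℝ) (hds : ZeroAsymp (fun x => |η' 0 x|) (-2 + ds/2)) :
    ds ≤ dH - (2*δ - (4 - dH)*γ) / (2 + γ) := by
  have hLpos : ∀ n, 0 < L n := fun n => one_pos.trans_le (hL n)
  obtain rfl : R = resistanceToInfty L := funext hR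
  have hdbl' := (eventually_gt_atTop N₀).mono hdbl
  have hα : HasGrowthExponent atTop (weightedVolume L) (fun N => (N : ℝ)) (2 + γ) :=
    hB1.hasGrowthExponent
  have hη : IsReturnFamily L η η' :=
    ⟨hderiv, hmono, hrec, fun n x hx => (one_div_pos.2 (hLpos n)).le.trans (hbnd n x hx).1,
      fun n x hx => (hbnd n x hx).2.trans (min_le_right _ _)⟩
  have hexponents : (4 - dH + δ) / (2 + γ) ≤ -(-2 + ds / 2) :=
    stmt_12_general hLpos hsum (one_pos.trans hc) hdbl' hα hB2bar.hasGrowthExponent hη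
      hds.hasGrowthExponent
  have hα_two := two_le_growthExponent_weightedVolume hLpos hsum (one_pos.trans hc) hdbl' hα
  have hbound : dH - (2 * δ - (4 - dH) * γ) / (2 + γ) = 4 - 2 * ((4 - dH + δ) / (2 + γ)) := by
    field_simp
    ring
  linarith
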